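/- For each of the three pairs of 2×2 complex matrices (A, B) ∈ {(I, I), (A₁, B₁), (A₂, B₂)}, the following six trace identities hold: tr(B²) = 3·tr(B) − 4; tr(AB) = 2·tr(B) − 2; tr(A⁵) = 4·tr(B) − 6; tr(A⁴) = 4·tr(B) − tr(A) − 4; tr(A³) = 3·tr(B) − tr(A) − 2; and tr(A²) = tr(B) + tr(A) − 2. (These express the relations τ_{s²} = 3τ_s − 2τ_1, τ_{rs} = 2τ_s − τ_1, τ_{r⁵} = 4τ_s − 3τ_1, τ_{r⁴} = 4τ_s − τ_r − 2τ_1, τ_{r³} = 3τ_s − τ_r − τ_1, and τ_{r²} = τ_s + τ_r − τ_1 in the coordinate ring of the SL(2,ℂ) character variety of the binary icosahedral group, verified on all three of its characters.) -/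

import Mathlib

noncomputable section

/-- `e₅ = exp(2πi/5)`. -/
def e5 : ℂ := Complex.exp (2 * Real.pi * Complex.I / 5)

/-- The matrix `A₁`, image of the generator `r` under the representation `σ₁`. -/
def A1 : Matrix (Fin 2) (Fin 2) ℂ :=
  (1/5 : ℂ) • !![-3*e5 - e5^2 + e5^3 - 2*e5^4, e5 - 3*e5^2 - 2*e5^3 - e5^4;
                 e5 + 2*e5^2 + 3*e5^3 - e5^4, -2*e5 + e5^2 - e5^3 - 3*e5^4]

/-- The matrix `B₁`, image of the generator `s` under the representation `σ₁`. -/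
def B1 : Matrix (Fin 2) (Fin 2) ℂ :=
  (1/5 : ℂ) • !![-e5 - 2*e5^2 - 3*e5^3 - 4*e5^4, 2*e5 - e5^2 + e5^3 - 2*e5^4;
                 2*e5 - e5^2 + e5^3 - 2*e5^4, -4*e5 - 3*e5^2 - 2*e5^3 - e5^4]

/-- The matrix `A₂`, image of the generator `r` under the representation `σ₂`. -/
def A2 : Matrix (Fin 2) (Fin 2) ℂ :=
  !![e5 - e5^2, -e5^2 - e5^4;
     -e5 - e5^4, -e5 - e5^3]

/-- The matrix `B₂`, image of the generator `s` under the representation `σ₂`. -/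
def B2 : Matrix (Fin 2) (Fin 2) ℂ :=
  !![1, -e5^3;
     e5^2, 0]

/-! A faithful representation of the binary icosahedral group in `SL(2, ℂ)` sends the central
element `r⁵ = s³ = (rs)²` to `-1`, so its generators have `tr s = 2 cos (π/3) = 1`,
`tr rs = 2 cos (π/2) = 0` and `tr r = 2 cos (kπ/5)` for an odd `k` prime to `5`, a root of
`t² = t + 1`. These values determine all the traces involved: by Cayley–Hamilton, the traces of
the powers of a matrix `M` of determinant `1` obey `tr Mᵏ⁺² = tr M · tr Mᵏ⁺¹ - tr Mᵏ`. -/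

section TracePowers

variable {n R : Type*} [Fintype n] [DecidableEq n] [CommRing R]

theorem sq_eq_trace_smul_sub_det_smul_one (hn : Fintype.card n = 2) (M : Matrix n n R) :
    M ^ 2 = M.trace • M - M.det • 1 := by
  nontriviality R
  have cayley_hamilton := M.aeval_self_charpoly
  simp only [M.charpoly_of_card_eq_two hn, map_add, map_sub, map_mul, map_pow,
    Polynomial.aeval_X, Polynomial.aeval_C, Algebra.algebraMap_eq_smul_one, smul_one_mul]
    at cayley_hamilton
  rw [← sub_eq_zero, ← cayley_hamilton]
  abel

theorem trace_pow_add_two (hn : Fintype.card n = 2) (M : Matrix n n R) (k : ℕ) :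
    (M ^ (k + 2)).trace = M.trace * (M ^ (k + 1)).trace - M.det * (M ^ k).trace := by
  rw [pow_add, sq_eq_trace_smul_sub_det_smul_one hn, mul_sub, mul_smul_comm, mul_smul_comm,
    ← pow_succ, mul_one, Matrix.trace_sub, Matrix.trace_smul, Matrix.trace_smul, smul_eq_mul,
    smul_eq_mul]

theorem trace_sq_eq_sq_trace_sub_two_mul_det (hn : Fintype.card n = 2) (M : Matrix n n R) :
    (M ^ 2).trace = M.trace ^ 2 - 2 * M.det := by
  have recurrence := trace_pow_add_two hn M 0
  simp only [zero_add, pow_one, pow_zero, Matrix.trace_one, hn, Nat.cast_ofNat] at recurrence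
  linear_combination recurrence

variable {M : Matrix n n R}

theorem trace_sq_of_sq_trace_eq (hn : Fintype.card n = 2) (hdet : M.det = 1)
    (htrace : M.trace ^ 2 = M.trace + 1) : (M ^ 2).trace = M.trace - 1 := by
  rw [trace_sq_eq_sq_trace_sub_two_mul_det hn, hdet, htrace]
  ring

theorem trace_pow_three_of_sq_trace_eq (hn : Fintype.card n = 2) (hdet : M.det = 1)
    (htrace : M.trace ^ 2 = M.trace + 1) : (M ^ 3).trace = 1 - M.trace := by
  rw [trace_pow_add_two hn M 1, trace_sq_of_sq_trace_eq hn hdet htrace, pow_one, hdet]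
  linear_combination htrace

theorem trace_pow_four_of_sq_trace_eq (hn : Fintype.card n = 2) (hdet : M.det = 1)
    (htrace : M.trace ^ 2 = M.trace + 1) : (M ^ 4).trace = -M.trace := by
  rw [trace_pow_add_two hn M 2, trace_pow_three_of_sq_trace_eq hn hdet htrace,
    trace_sq_of_sq_trace_eq hn hdet htrace, hdet]
  linear_combination -htrace

theorem trace_pow_five_of_sq_trace_eq (hn : Fintype.card n = 2) (hdet : M.det = 1)
    (htrace : M.trace ^ 2 = M.trace + 1) : (M ^ 5).trace = -2 := by
  rw [trace_pow_add_two hn M 3, trace_pow_four_of_sq_trace_eq hn hdet htrace,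
    trace_pow_three_of_sq_trace_eq hn hdet htrace, hdet]
  linear_combination -htrace

end TracePowers

/-- The pairs `(A, B)` in `SL(2, R)` with the traces that a faithful representation of the binary
icosahedral group gives to its generators `r` and `s`. The equation for `A.trace` covers both
Galois-conjugate values `(1 ± √5) / 2`. -/
structure IsIcosahedralPair {R : Type*} [CommRing R] (A B : Matrix (Fin 2) (Fin 2) R) : Prop where
  det_left : A.det = 1
  det_right : B.det = 1
  sq_trace_left : A.trace ^ 2 = A.trace + 1
  trace_right : B.trace = 1
  trace_mul : (A * B).trace = 0

theorem IsIcosahedralPair.trace_relations {R : Type*} [CommRing R]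
    {A B : Matrix (Fin 2) (Fin 2) R} (h : IsIcosahedralPair A B) :
    (B ^ 2).trace = 3 * B.trace - 4 ∧
    (A * B).trace = 2 * B.trace - 2 ∧
    (A ^ 5).trace = 4 * B.trace - 6 ∧
    (A ^ 4).trace = 4 * B.trace - A.trace - 4 ∧
    (A ^ 3).trace = 3 * B.trace - A.trace - 2 ∧
    (A ^ 2).trace = B.trace + A.trace - 2 := by
  have hn : Fintype.card (Fin 2) = 2 := Fintype.card_fin 2
  rw [trace_sq_eq_sq_trace_sub_two_mul_det hn B, h.det_right, h.trace_right, h.trace_mul,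
    trace_pow_five_of_sq_trace_eq hn h.det_left h.sq_trace_left,
    trace_pow_four_of_sq_trace_eq hn h.det_left h.sq_trace_left,
    trace_pow_three_of_sq_trace_eq hn h.det_left h.sq_trace_left,
    trace_sq_of_sq_trace_eq hn h.det_left h.sq_trace_left]
  refine ⟨?_, ?_, ?_, ?_, ?_, ?_⟩ <;> ring

section FifthRoot

variable {R : Type*} [CommRing R] {ζ : R}

theorem sq_neg_add_pow_four (hζ : 1 + ζ + ζ ^ 2 + ζ ^ 3 + ζ ^ 4 = 0) :
    (-(ζ + ζ ^ 4)) ^ 2 = -(ζ + ζ ^ 4) + 1 := by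
  linear_combination (ζ ^ 3 * (ζ - 1) + 2 * (ζ - 1) + 1) * hζ

theorem sq_neg_sq_add_pow_three (hζ : 1 + ζ + ζ ^ 2 + ζ ^ 3 + ζ ^ 4 = 0) :
    (-(ζ ^ 2 + ζ ^ 3)) ^ 2 = -(ζ ^ 2 + ζ ^ 3) + 1 := by
  linear_combination (ζ ^ 2 + ζ - 1) * hζ

end FifthRoot

theorem isPrimitiveRoot_e5 : IsPrimitiveRoot e5 5 := by
  simpa [e5] using Complex.isPrimitiveRoot_exp 5 (by norm_num)

theorem geom_sum_e5 : 1 + e5 + e5 ^ 2 + e5 ^ 3 + e5 ^ 4 = 0 := by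
  simpa [Finset.sum_range_succ] using isPrimitiveRoot_e5.geom_sum_eq_zero (by norm_num)

theorem trace_A1 : A1.trace = -(e5 + e5 ^ 4) := by
  rw [A1, Matrix.trace_smul, Matrix.trace_fin_two_of, smul_eq_mul]
  ring

theorem trace_A2 : A2.trace = -(e5 ^ 2 + e5 ^ 3) := by
  rw [A2, Matrix.trace_fin_two_of]
  ring

theorem isIcosahedralPair_A1_B1 : IsIcosahedralPair A1 B1 where
  det_left := by
    rw [A1, Matrix.det_smul, Matrix.det_fin_two_of, Fintype.card_fin]
    grind [geom_sum_e5]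
  det_right := by
    rw [B1, Matrix.det_smul, Matrix.det_fin_two_of, Fintype.card_fin]
    grind [geom_sum_e5]
  sq_trace_left := by
    rw [trace_A1]
    exact sq_neg_add_pow_four geom_sum_e5
  trace_right := by
    rw [B1, Matrix.trace_smul, Matrix.trace_fin_two_of, smul_eq_mul]
    linear_combination -geom_sum_e5
  trace_mul := by
    rw [A1, B1, Matrix.smul_mul, Matrix.mul_smul, Matrix.mul_fin_two, Matrix.trace_smul,
      Matrix.trace_smul, Matrix.trace_fin_two_of, smul_eq_mul, smul_eq_mul]
    grind [geom_sum_e5]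

theorem isIcosahedralPair_A2_B2 : IsIcosahedralPair A2 B2 where
  det_left := by
    rw [A2, Matrix.det_fin_two_of]
    grind [geom_sum_e5]
  det_right := by
    rw [B2, Matrix.det_fin_two_of]
    linear_combination (e5 - 1) * geom_sum_e5
  sq_trace_left := by
    rw [trace_A2]
    exact sq_neg_sq_add_pow_three geom_sum_e5
  trace_right := by
    rw [B2, Matrix.trace_fin_two_of, add_zero]
  trace_mul := by
    rw [A2, B2, Matrix.mul_fin_two, Matrix.trace_fin_two_of]
    grind [geom_sum_e5]

/-- For each of the three pairs `(A, B) ∈ {(I, I), (A₁, B₁), (A₂, B₂)}`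
(the images of the generators `r, s` under the three `SL(2,ℂ)` representations
`σ₀, σ₁, σ₂` of the binary icosahedral group), the six trace identities
`τ_{s²} = 3τ_s − 2τ_1`, `τ_{rs} = 2τ_s − τ_1`, `τ_{r⁵} = 4τ_s − 3τ_1`,
`τ_{r⁴} = 4τ_s − τ_r − 2τ_1`, `τ_{r³} = 3τ_s − τ_r − τ_1`, and
`τ_{r²} = τ_s + τ_r − τ_1` hold (with `τ_1 = tr I = 2`). -/
theorem character_variety_relations :
    ∀ A B : Matrix (Fin 2) (Fin 2) ℂ,
      ((A = 1 ∧ B = 1) ∨ (A = A1 ∧ B = B1) ∨ (A = A2 ∧ B = B2)) →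
      Matrix.trace (B ^ 2) = 3 * Matrix.trace B - 4 ∧
      Matrix.trace (A * B) = 2 * Matrix.trace B - 2 ∧
      Matrix.trace (A ^ 5) = 4 * Matrix.trace B - 6 ∧
      Matrix.trace (A ^ 4) = 4 * Matrix.trace B - Matrix.trace A - 4 ∧
      Matrix.trace (A ^ 3) = 3 * Matrix.trace B - Matrix.trace A - 2 ∧
      Matrix.trace (A ^ 2) = Matrix.trace B + Matrix.trace A - 2 := by
  rintro A B (⟨rfl, rfl⟩ | ⟨rfl, rfl⟩ | ⟨rfl, rfl⟩)
  · simp only [one_pow, one_mul, Matrix.trace_one, Fintype.card_fin]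
    norm_num
  · exact isIcosahedralPair_A1_B1.trace_relations
  · exact isIcosahedralPair_A2_B2.trace_relations

end
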